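/- The radial distribution distance is not a metric: there exist non-isomorphic rooted metric measure spaces at radial distribution distance 0. Precisely, let X = {a,b,c} be the three-point metric space in which the distance between any two distinct points is 1, with origin a. Let μ₁ be the measure assigning mass 1 to each of a, b, c, and let μ₂ be the measure assigning mass 1 to a, mass 1/2 to b, and mass 3/2 to c. Then: (i) d_rd((X,μ₁,a),(X,μ₂,a)) = 0, and (ii) there is no bijection f : X → X with f(a) = a that preserves distances and satisfies f_*μ₁ = μ₂. -/

import Mathlib

open MeasureTheory Metric

/-- The radial distribution distance between rooted metric measure spaces:
`d_rd((X,o),(Y,o')) = ∫₀^∞ e^{-r} |μ(B̄_r(o)) - ν(B̄_r(o'))| dr`. -/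
noncomputable def radialDistrDist {X Y : Type*} [MetricSpace X] [MetricSpace Y]
    [MeasurableSpace X] [MeasurableSpace Y]
    (μ : Measure X) (o : X) (ν : Measure Y) (o' : Y) : ℝ :=
  ∫ r in Set.Ioi (0 : ℝ),
    Real.exp (-r) * |(μ (closedBall o r)).toReal - (ν (closedBall o' r)).toReal|

/-- A three-point set `{a, b, c}`. -/
inductive ThreePoint : Type
  | a : ThreePoint
  | b : ThreePoint
  | c : ThreePoint
  deriving DecidableEq

/-- The metric on `{a, b, c}` in which any two distinct points are at
distance `1`. -/
noncomputable instance : MetricSpace ThreePoint where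
  dist x y := if x = y then 0 else 1
  dist_self x := by simp
  dist_comm x y := by
    show (if x = y then (0:ℝ) else 1) = if y = x then 0 else 1
    by_cases h : x = y
    · simp [h]
    · rw [if_neg h, if_neg (Ne.symm h)]
  dist_triangle x y z := by
    show (if x = z then (0:ℝ) else 1) ≤
      (if x = y then (0:ℝ) else 1) + (if y = z then (0:ℝ) else 1)
    by_cases hxz : x = z
    · simp only [hxz, if_pos rfl]
      positivity
    · by_cases hxy : x = y
      · by_cases hyz : y = z
        · exact absurd (hxy.trans hyz) hxz
        · simp [hxz, hxy, hyz]
      · simp only [if_neg hxz, if_neg hxy]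
        have : (0:ℝ) ≤ if y = z then 0 else 1 := by positivity
        linarith
  eq_of_dist_eq_zero := by
    intro x y h
    by_contra hxy
    change (if x = y then (0:ℝ) else 1) = 0 at h
    rw [if_neg hxy] at h
    exact one_ne_zero h

instance : MeasurableSpace ThreePoint := ⊤

/-- The measure assigning mass `1` to each of `a`, `b`, `c`. -/
noncomputable def tpMeasure₁ : Measure ThreePoint :=
  Measure.dirac ThreePoint.a + Measure.dirac ThreePoint.b + Measure.dirac ThreePoint.c

/-- The measure assigning mass `1` to `a`, mass `1/2` to `b`, and mass `3/2`
to `c`. -/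
noncomputable def tpMeasure₂ : Measure ThreePoint :=
  Measure.dirac ThreePoint.a + (1/2 : ENNReal) • Measure.dirac ThreePoint.b
    + (3/2 : ENNReal) • Measure.dirac ThreePoint.c

/-!
The closed balls about `a` of positive radius are `{a}` and the whole space, so a radial
distribution only records the mass of `a` and the total mass. On the other hand `tpMeasure₁` is the
counting measure, and no push-forward of a counting measure has an event of mass `1/2`.
-/

section ConstantDistance

variable {X : Type*} [PseudoMetricSpace X] {o : X} {ρ r : ℝ}

theorem closedBall_eq_univ_of_forall_ne_dist_eq (h : ∀ x ≠ o, dist x o = ρ) (hr : 0 ≤ r)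
    (hρr : ρ ≤ r) : closedBall o r = Set.univ := by
  refine Set.eq_univ_of_forall fun x => ?_
  obtain rfl | hx := eq_or_ne x o
  · exact mem_closedBall_self hr
  · exact (h x hx).trans_le hρr

theorem closedBall_eq_singleton_of_forall_ne_dist_eq (h : ∀ x ≠ o, dist x o = ρ) (hr : 0 ≤ r)
    (hrρ : r < ρ) : closedBall o r = {o} := by
  refine Set.Subset.antisymm (fun x hxr => ?_)
    (Set.singleton_subset_iff.mpr (mem_closedBall_self hr))
  by_contra hx
  exact (hrρ.trans_eq (h x hx).symm).not_ge hxr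

end ConstantDistance

section RadialDistribution

variable {X Y : Type*} [MetricSpace X] [MetricSpace Y] [MeasurableSpace X] [MeasurableSpace Y]
  {μ : Measure X} {ν : Measure Y} {o : X} {o' : Y}

theorem radialDistrDist_eq_zero_of_measure_closedBall_eq
    (h : ∀ r > 0, μ (closedBall o r) = ν (closedBall o' r)) : radialDistrDist μ o ν o' = 0 :=
  setIntegral_eq_zero_of_forall_eq_zero fun r hr => by
    rw [h r hr, sub_self, abs_zero, mul_zero]

theorem radialDistrDist_eq_zero_of_forall_ne_dist_eq {ρ : ℝ} (hX : ∀ x ≠ o, dist x o = ρ)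
    (hY : ∀ y ≠ o', dist y o' = ρ) (hroot : μ {o} = ν {o'})
    (htotal : μ Set.univ = ν Set.univ) : radialDistrDist μ o ν o' = 0 := by
  refine radialDistrDist_eq_zero_of_measure_closedBall_eq fun r hr => ?_
  obtain hρr | hrρ := le_or_gt ρ r
  · rwa [closedBall_eq_univ_of_forall_ne_dist_eq hX hr.le hρr,
      closedBall_eq_univ_of_forall_ne_dist_eq hY hr.le hρr]
  · rwa [closedBall_eq_singleton_of_forall_ne_dist_eq hX hr.le hrρ,
      closedBall_eq_singleton_of_forall_ne_dist_eq hY hr.le hrρ]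

end RadialDistribution

theorem one_le_map_count_apply {X Y : Type*} [MeasurableSpace X] [MeasurableSpace Y] {f : X → Y}
    (hf : Measurable f) {s : Set Y} (hs : MeasurableSet s)
    (h : Measure.map f Measure.count s ≠ 0) : 1 ≤ Measure.map f Measure.count s := by
  rw [Measure.map_apply hf hs] at h ⊢
  obtain ⟨x, hx⟩ : (f ⁻¹' s).Nonempty := nonempty_of_measure_ne_zero h
  calc (1 : ENNReal) = ({x} : Set X).encard := by rw [Set.encard_singleton, ENat.toENNReal_one]
    _ ≤ (f ⁻¹' s).encard :=
      ENat.toENNReal_le.mpr (Set.encard_le_encard (Set.singleton_subset_iff.mpr hx))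
    _ = Measure.count (f ⁻¹' s) := (Measure.count_apply (hf hs)).symm

namespace ThreePoint

instance : Fintype ThreePoint where
  elems := {a, b, c}
  complete x := by cases x <;> decide

instance : DiscreteMeasurableSpace ThreePoint := ⟨fun _ => trivial⟩

theorem dist_eq_one_of_ne {x y : ThreePoint} (h : x ≠ y) : dist x y = 1 := if_neg h

end ThreePoint

theorem tpMeasure₁_eq_count : tpMeasure₁ = Measure.count := by
  have huniv : (Finset.univ : Finset ThreePoint) = {.a, .b, .c} := rfl
  simp [Measure.count, Measure.sum_fintype, huniv, tpMeasure₁, add_assoc]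

theorem tpMeasure₁_singleton (x : ThreePoint) : tpMeasure₁ {x} = 1 := by
  rw [tpMeasure₁_eq_count, Measure.count_singleton]

theorem tpMeasure₂_singleton_a : tpMeasure₂ {ThreePoint.a} = 1 := by
  simp [tpMeasure₂]

theorem tpMeasure₂_singleton_b : tpMeasure₂ {ThreePoint.b} = 1 / 2 := by
  simp [tpMeasure₂]

theorem tpMeasure₁_univ_eq_tpMeasure₂_univ : tpMeasure₁ Set.univ = tpMeasure₂ Set.univ := by
  have hbc : (1 : ENNReal) + 1 = 1 / 2 + 3 / 2 := by
    rw [ENNReal.div_add_div_same, ENNReal.eq_div_iff two_ne_zero ENNReal.ofNat_ne_top]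
    norm_num
  simp only [tpMeasure₁, tpMeasure₂, Measure.add_apply, Measure.smul_apply, measure_univ,
    smul_eq_mul, mul_one, add_assoc, hbc]

theorem map_tpMeasure₁_ne_tpMeasure₂ (f : ThreePoint → ThreePoint) :
    Measure.map f tpMeasure₁ ≠ tpMeasure₂ := by
  intro hmap
  have hb : Measure.map f Measure.count {ThreePoint.b} = 1 / 2 := by
    rw [← tpMeasure₁_eq_count, hmap, tpMeasure₂_singleton_b]
  have hge : (1 : ENNReal) ≤ 1 / 2 :=
    hb ▸ one_le_map_count_apply .of_discrete .of_discrete (by simp [hb])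
  exact hge.not_gt (by simp)

theorem radialDistrDist_not_a_metric_general :
    radialDistrDist tpMeasure₁ ThreePoint.a tpMeasure₂ ThreePoint.a = 0 ∧
    ∀ f : ThreePoint → ThreePoint, Measure.map f tpMeasure₁ ≠ tpMeasure₂ :=
  have hdist : ∀ x ≠ ThreePoint.a, dist x ThreePoint.a = 1 := fun _ => ThreePoint.dist_eq_one_of_ne
  have hroot : tpMeasure₁ {ThreePoint.a} = tpMeasure₂ {ThreePoint.a} :=
    (tpMeasure₁_singleton _).trans tpMeasure₂_singleton_a.symm
  ⟨radialDistrDist_eq_zero_of_forall_ne_dist_eq hdist hdist hroot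
    tpMeasure₁_univ_eq_tpMeasure₂_univ, map_tpMeasure₁_ne_tpMeasure₂⟩

/-- The radial distribution distance is not a metric: the two rooted mm spaces
`(ThreePoint, tpMeasure₁, a)` and `(ThreePoint, tpMeasure₂, a)` are at radial
distribution distance `0`, yet there is no distance-preserving,
measure-preserving bijection between them fixing the origin `a`. -/
theorem radialDistrDist_not_a_metric :
    radialDistrDist tpMeasure₁ ThreePoint.a tpMeasure₂ ThreePoint.a = 0 ∧
    ¬ ∃ f : ThreePoint → ThreePoint, Function.Bijective f ∧
        f ThreePoint.a = ThreePoint.a ∧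
        (∀ x y : ThreePoint, dist (f x) (f y) = dist x y) ∧
        Measure.map f tpMeasure₁ = tpMeasure₂ :=
  ⟨radialDistrDist_not_a_metric_general.1,
    fun ⟨f, _, _, _, hmap⟩ => radialDistrDist_not_a_metric_general.2 f hmap⟩
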